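/- arXiv:1804.08520 — 3 statements merged into one kernel-verified Lean document; each statement's English description precedes it below -/
import Mathlib

section
/- Let M be a bounded linear operator on L¹(ℝ₊) that maps the Sobolev space W^{1,1}(ℝ₊) into itself and satisfies (Mφ)′ = −M(φ′) for every φ ∈ W^{1,1}(ℝ₊). Then M = 0. -/
/-!
The functions `t ↦ exp (-λ t)` with `λ > 0` are eigenvectors of differentiation with eigenvalue
`-λ`. The anticommutation relation makes the image under `M` of such a function a solution
of `ψ' = λ ψ`, hence a multiple of `exp (λ t)`; integrability forces it to vanish
(`sobRep1_eq_zero_of_deriv`). Thus `M` kills every `exp (-t) * P (exp (-t))` with `P` a polynomial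
(`exists_ker_exp_polynomial`). These functions are dense in `L¹(ℝ₊)`: for `g` continuous with
compact support, the Weierstrass theorem in the variable `x = exp (-t) ∈ [0, 1]`, applied to
`g (-log x) / x`, gives `|g t - exp (-t) * P (exp (-t))| ≤ ε exp (-t)`
(`exists_polynomial_exp_near`), and such `g` are dense. By continuity, `M = 0`.
-/

open MeasureTheory Set

noncomputable section

def μP : Measure ℝ := volume.restrict (Ici 0)

/-- `L¹(ℝ₊)`. -/
abbrev L1S := Lp ℂ 1 μP

/-- `(φ, φ')` represents an element of the Sobolev space `W^{1,1}(ℝ₊)`. -/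
def SobRep1 (φ φ' : ℝ → ℂ) : Prop :=
  IntegrableOn φ (Ici 0) ∧ IntegrableOn φ' (Ici 0) ∧
  ∀ t ∈ Ici (0:ℝ), φ t = φ 0 + ∫ s in (0:ℝ)..t, φ' s

theorem hasDerivAt_exp_neg_mul (a x : ℝ) :
    HasDerivAt (fun x : ℝ => Complex.exp (-(a * x))) (Complex.exp (-(a * x)) * (-a)) x := by
  have h : HasDerivAt (fun x : ℝ => -((a : ℂ) * (x : ℂ))) (-((a : ℂ) * ((1 : ℝ) : ℂ))) x :=
    (((hasDerivAt_id x).ofReal_comp).const_mul (a : ℂ)).neg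
  simpa using h.cexp

/-- An element of `W^{1,1}(ℝ₊)` solving `ψ' = a ψ` with `a > 0` vanishes: it equals
`ψ 0 * exp (a t)`, which is integrable only if `ψ 0 = 0`. -/
theorem sobRep1_eq_zero_of_deriv {ψ ψ' : ℝ → ℂ} (h : SobRep1 ψ ψ') {a : ℝ} (ha : 0 < a)
    (hd : ψ' =ᵐ[μP] fun t => (a : ℂ) * ψ t) : ∀ t, 0 ≤ t → ψ t = 0 := by
  obtain ⟨hψ, hψ', heq⟩ := h
  have hi : Integrable ((Ici (0:ℝ)).indicator ψ') :=
    IntegrableOn.integrable_indicator hψ' measurableSet_Ici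
  -- `H` is a continuous extension of `ψ` to the whole line.
  set H : ℝ → ℂ := fun t => ψ 0 + ∫ s in (0:ℝ)..t, (Ici (0:ℝ)).indicator ψ' s with hH
  have hHc : Continuous H :=
    continuous_const.add (intervalIntegral.continuous_primitive (fun _ _ => hi.intervalIntegrable) 0)
  have hHψ : ∀ t, 0 ≤ t → ψ t = H t := by
    intro t ht
    rw [heq t ht, hH]
    congr 1
    apply intervalIntegral.integral_congr
    intro s hs
    rw [uIcc_of_le ht] at hs
    simp [indicator_of_mem (show s ∈ Ici (0:ℝ) from hs.1)]
  have hHint : ∀ t, 0 ≤ t → H t = ψ 0 + ∫ s in (0:ℝ)..t, (a : ℂ) * H s := by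
    intro t ht
    rw [← hHψ t ht, heq t ht]
    congr 1
    apply intervalIntegral.integral_congr_ae
    have h2 := (ae_restrict_iff' (measurableSet_Ici (a := (0:ℝ)))).1 hd
    filter_upwards [h2] with s hs hst
    rw [uIoc_of_le ht] at hst
    rw [hs hst.1.le, hHψ s hst.1.le]
  have hexp : ∀ t, 0 ≤ t → H t = ψ 0 * Complex.exp (a * t) := by
    intro t ht
    set K : ℝ → ℂ := fun t => Complex.exp (-(a * t)) * (ψ 0 + ∫ s in (0:ℝ)..t, (a : ℂ) * H s)
      with hK
    have hder : ∀ x : ℝ, HasDerivAt K (Complex.exp (-(a * x)) * (-a) *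
        (ψ 0 + ∫ s in (0:ℝ)..x, (a : ℂ) * H s) + Complex.exp (-(a * x)) * (a * H x)) x := by
      intro x
      have h1 := hasDerivAt_exp_neg_mul a x
      have hc : Continuous fun s => (a : ℂ) * H s := continuous_const.mul hHc
      exact h1.mul ((intervalIntegral.integral_hasDerivAt_right (hc.intervalIntegrable _ _)
        (hc.stronglyMeasurableAtFilter _ _) hc.continuousAt).const_add _)
    have hKc := constant_of_has_deriv_right_zero (f := K) (a := 0) (b := t)
      (fun x _ => (hder x).continuousAt.continuousWithinAt)
      (fun x hx => by
        have := (hder x).hasDerivWithinAt (s := Ici x)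
        rw [← hHint x hx.1] at this
        convert this using 1
        ring) t ⟨ht, le_rfl⟩
    simp only [hK, ← hHint t ht] at hKc
    simp only [Complex.ofReal_zero, mul_zero, neg_zero, Complex.exp_zero,
      intervalIntegral.integral_same, add_zero, one_mul] at hKc
    rw [← hKc, mul_comm, ← mul_assoc, ← Complex.exp_add]
    simp
  have h0 : ψ 0 = 0 := by
    by_contra hne
    have hcst : IntegrableOn (fun _ : ℝ => ψ 0) (Ici 0) := by
      refine Integrable.mono hψ aestronglyMeasurable_const ?_
      filter_upwards [ae_restrict_mem measurableSet_Ici] with t ht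
      have ht : 0 ≤ t := ht
      rw [hHψ t ht, hexp t ht, norm_mul, Complex.norm_exp]
      have : 1 ≤ Real.exp ((a * t : ℂ)).re := by
        rw [← Complex.ofReal_mul, Complex.ofReal_re]
        exact Real.one_le_exp (by positivity)
      nlinarith [norm_nonneg (ψ 0)]
    rw [integrableOn_const_iff] at hcst
    simp [hne] at hcst
  intro t ht
  rw [hHψ t ht, hexp t ht, h0, zero_mul]

theorem integrable_exp_neg_mul {a : ℝ} (ha : 0 < a) :
    Integrable (fun t : ℝ => Complex.exp (-(a * t))) μP := by
  have := integrableOn_exp_mul_complex_Ioi (a := -(a : ℂ)) (by simpa using ha) 0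
  rw [← integrableOn_Ici_iff_integrableOn_Ioi] at this
  simpa [μP, IntegrableOn] using this

theorem sobRep1_exp {a : ℝ} (ha : 0 < a) :
    SobRep1 (fun t : ℝ => Complex.exp (-(a * t))) (fun t => (-a : ℂ) * Complex.exp (-(a * t))) := by
  refine ⟨integrable_exp_neg_mul ha, (integrable_exp_neg_mul ha).const_mul _, fun t _ => ?_⟩
  rw [intervalIntegral.integral_eq_sub_of_hasDerivAt
    (f := fun t : ℝ => Complex.exp (-(a * t)))]
  · ring
  · intro x _
    simpa [mul_comm] using hasDerivAt_exp_neg_mul a x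
  · apply Continuous.intervalIntegrable
    fun_prop

theorem exists_polynomial_exp_near_real {g : ℝ → ℝ} (hg : Continuous g) (hs : HasCompactSupport g)
    {ε : ℝ} (hε : 0 < ε) : ∃ p : Polynomial ℝ, ∀ t, 0 ≤ t →
      |Real.exp (-t) * p.eval (Real.exp (-t)) - g t| ≤ ε * Real.exp (-t) := by
  -- With `0⁻¹ = 0` the function `x ↦ g (-log x) / x` takes the value `0` at `0`.
  have hc : ContinuousOn (fun x : ℝ => g (-Real.log x) * x⁻¹) (Icc 0 1) := by
    intro x hx
    apply ContinuousAt.continuousWithinAt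
    rcases hx.1.eq_or_lt with rfl | hpos
    · obtain ⟨R, hR⟩ := hs.isBounded.exists_norm_le
      have hz : (fun x : ℝ => g (-Real.log x) * x⁻¹) =ᶠ[nhds 0] fun _ => 0 := by
        filter_upwards [Metric.ball_mem_nhds (0:ℝ) (Real.exp_pos (-R))] with x hx
        by_cases h0 : x = 0
        · simp [h0]
        have hx' : |x| < Real.exp (-R) := by simpa using hx
        have hl : Real.log x < -R := by
          rw [← Real.log_abs]
          exact (Real.log_lt_iff_lt_exp (abs_pos.2 h0)).2 hx'
        have : g (-Real.log x) = 0 := by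
          apply image_eq_zero_of_notMem_tsupport
          intro hm
          have := hR _ hm
          have := le_abs_self (-Real.log x)
          rw [Real.norm_eq_abs] at *
          linarith
        simp [this]
      exact (continuousAt_const).congr hz.symm
    · exact (hg.continuousAt.comp (Real.continuousAt_log hpos.ne').neg).mul
        (continuousAt_inv₀ hpos.ne')
  obtain ⟨p, hp⟩ := exists_polynomial_near_of_continuousOn 0 1 _ hc ε hε
  refine ⟨p, fun t ht => ?_⟩
  have h := hp (Real.exp (-t)) ⟨(Real.exp_pos _).le, Real.exp_le_one_iff.2 (by linarith)⟩
  have he := Real.exp_pos (-t)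
  simp only [Real.log_exp, neg_neg] at h
  have : Real.exp (-t) * p.eval (Real.exp (-t)) - g t =
      Real.exp (-t) * (p.eval (Real.exp (-t)) - g t * (Real.exp (-t))⁻¹) := by
    field_simp
  rw [this, abs_mul, abs_of_pos he, mul_comm]
  exact mul_le_mul_of_nonneg_right h.le he.le

/-- Weierstrass approximation in the variable `exp (-t)`, with weight `exp (-t)`. -/
theorem exists_polynomial_exp_near {g : ℝ → ℂ} (hg : Continuous g) (hs : HasCompactSupport g)
    {ε : ℝ} (hε : 0 < ε) : ∃ P : Polynomial ℂ, ∀ t : ℝ, 0 ≤ t →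
      ‖Complex.exp (-t) * P.eval (Complex.exp (-t)) - g t‖ ≤ ε * Real.exp (-t) := by
  obtain ⟨p, hp⟩ := exists_polynomial_exp_near_real (Complex.continuous_re.comp hg)
    (hs.comp_left Complex.zero_re) (half_pos hε)
  obtain ⟨q, hq⟩ := exists_polynomial_exp_near_real (Complex.continuous_im.comp hg)
    (hs.comp_left Complex.zero_im) (half_pos hε)
  refine ⟨p.map Complex.ofRealHom + Polynomial.C Complex.I * q.map Complex.ofRealHom,
    fun t ht => ?_⟩
  have hev : ∀ r : Polynomial ℝ, (r.map Complex.ofRealHom).eval (Complex.exp (-t)) =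
      ((r.eval (Real.exp (-t)) : ℝ) : ℂ) := by
    intro r
    have : Complex.exp (-t) = Complex.ofRealHom (Real.exp (-t)) := by simp
    rw [this, Polynomial.eval_map_apply]
    rfl
  have he : Complex.exp (-t) = ((Real.exp (-t) : ℝ) : ℂ) := by simp
  have hsplit : Complex.exp (-t) * (p.map Complex.ofRealHom +
      Polynomial.C Complex.I * q.map Complex.ofRealHom).eval (Complex.exp (-t)) - g t =
      ((Real.exp (-t) * p.eval (Real.exp (-t)) - (g t).re : ℝ) : ℂ) +
      ((Real.exp (-t) * q.eval (Real.exp (-t)) - (g t).im : ℝ) : ℂ) * Complex.I := by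
    rw [Polynomial.eval_add, Polynomial.eval_mul, Polynomial.eval_C, hev, hev, he]
    conv_lhs => rw [← Complex.re_add_im (g t)]
    push_cast
    ring
  rw [hsplit]
  refine (norm_add_le _ _).trans ?_
  rw [norm_mul, Complex.norm_I, mul_one, Complex.norm_real, Complex.norm_real]
  have h1 := hp t ht
  have h2 := hq t ht
  simp only [Function.comp, Real.norm_eq_abs] at *
  linarith

/-- If `M` anticommutes with differentiation, its kernel contains every function
`exp (-t) * P (exp (-t))`. -/
theorem exists_ker_exp_polynomial (M : L1S →L[ℂ] L1S)
    (hM : ∀ (φ φ' : ℝ → ℂ) (f f' : L1S), SobRep1 φ φ' →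
      ⇑f =ᵐ[μP] φ → ⇑f' =ᵐ[μP] φ' →
      ∃ ψ ψ' : ℝ → ℂ, SobRep1 ψ ψ' ∧ ⇑(M f) =ᵐ[μP] ψ ∧
        ψ' =ᵐ[μP] fun t => -(⇑(M f')) t) (P : Polynomial ℂ) :
    ∃ k : L1S, M k = 0 ∧
      ⇑k =ᵐ[μP] fun t : ℝ => Complex.exp (-t) * P.eval (Complex.exp (-t)) := by
  induction P using Polynomial.induction_on' with
  | add p q hp hq =>
    obtain ⟨k, hk, hk'⟩ := hp
    obtain ⟨l, hl, hl'⟩ := hq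
    refine ⟨k + l, by rw [map_add, hk, hl, add_zero], ?_⟩
    filter_upwards [hk', hl', Lp.coeFn_add k l] with t h1 h2 h3
    rw [h3, Pi.add_apply, h1, h2, Polynomial.eval_add, mul_add]
  | monomial n c =>
    have ha : (0:ℝ) < n + 1 := by positivity
    have hi := integrable_exp_neg_mul ha
    set e : L1S := hi.toL1 _ with he
    have hee : ⇑e =ᵐ[μP] fun t : ℝ => Complex.exp (-(((n + 1 : ℝ) : ℂ) * t)) := hi.coeFn_toL1
    have hMe : M e = 0 := by
      obtain ⟨ψ, ψ', hS, h1, h2⟩ := hM _ _ e ((-((n + 1 : ℝ) : ℂ)) • e) (sobRep1_exp ha) hee (by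
        filter_upwards [hee, Lp.coeFn_smul (-((n + 1 : ℝ) : ℂ)) e] with t h1 h2
        rw [h2, Pi.smul_apply, h1, smul_eq_mul])
      have hz := sobRep1_eq_zero_of_deriv hS ha (by
        rw [map_smul] at h2
        filter_upwards [h1, h2, Lp.coeFn_smul (-((n + 1 : ℝ) : ℂ)) (M e)] with t h1 h2 h3
        rw [h2, h3, Pi.smul_apply, h1, smul_eq_mul]
        ring)
      rw [Lp.eq_zero_iff_ae_eq_zero]
      have hmem : ∀ᵐ t ∂μP, t ∈ Ici (0:ℝ) := ae_restrict_mem measurableSet_Ici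
      filter_upwards [h1, hmem] with t h3 h4
      rw [h3, hz t h4, Pi.zero_apply]
    refine ⟨c • e, by rw [map_smul, hMe, smul_zero], ?_⟩
    filter_upwards [hee, Lp.coeFn_smul c e] with t h1 h2
    rw [h2, Pi.smul_apply, h1, smul_eq_mul, Polynomial.eval_monomial, ← Complex.exp_nat_mul,
      mul_left_comm, ← Complex.exp_add]
    congr 2
    push_cast
    ring

/-- key step in the proof of Theorem A.4: a bounded operator `M` on
`L¹(ℝ₊)` mapping `W^{1,1}(ℝ₊)` into itself with `(Mφ)' = −M(φ')` is zero. -/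
theorem stmt12 (M : L1S →L[ℂ] L1S)
    (hM : ∀ (φ φ' : ℝ → ℂ) (f f' : L1S), SobRep1 φ φ' →
      ⇑f =ᵐ[μP] φ → ⇑f' =ᵐ[μP] φ' →
      ∃ ψ ψ' : ℝ → ℂ, SobRep1 ψ ψ' ∧ ⇑(M f) =ᵐ[μP] ψ ∧
        ψ' =ᵐ[μP] fun t => -(⇑(M f')) t) :
    M = 0 := by
  have hreg : μP.Regular := by
    unfold μP
    infer_instance
  have hexpint : Integrable (fun t : ℝ => Real.exp (-t)) μP := by
    have := (integrable_exp_neg_mul one_pos).norm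
    simpa [Complex.norm_exp] using this
  have hexpval : ∫ t, Real.exp (-t) ∂μP = 1 := by
    rw [μP, integral_Ici_eq_integral_Ioi, integral_exp_neg_Ioi_zero]
  have hcl : IsClosed {f : L1S | M f = 0} := isClosed_eq M.continuous continuous_const
  ext1 f
  change f ∈ {f : L1S | M f = 0}
  rw [← hcl.closure_eq, Metric.mem_closure_iff]
  intro ε hε
  obtain ⟨g, hgs, hgn, hgc, hgi⟩ :=
    (L1.integrable_coeFn f).exists_hasCompactSupport_integral_sub_le (half_pos (half_pos hε))
  obtain ⟨P, hP⟩ := exists_polynomial_exp_near hgc hgs (half_pos hε)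
  obtain ⟨k, hk, hk'⟩ := exists_ker_exp_polynomial M hM P
  refine ⟨k, hk, ?_⟩
  have hmem : ∀ᵐ t ∂μP, t ∈ Ici (0:ℝ) := ae_restrict_mem measurableSet_Ici
  have hfg : Integrable (fun t => ‖f t - g t‖) μP := ((L1.integrable_coeFn f).sub hgi).norm
  have hbound : ∫ t, ‖(f - k : L1S) t‖ ∂μP ≤
      ∫ t, (‖f t - g t‖ + ε / 2 * Real.exp (-t)) ∂μP := by
    refine integral_mono_ae (L1.integrable_coeFn _).norm (hfg.add (hexpint.const_mul _)) ?_
    filter_upwards [hk', hmem, Lp.coeFn_sub f k] with t h1 h2 h3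
    have h4 := hP t h2
    rw [← h1] at h4
    simp only [h3, Pi.sub_apply]
    rw [norm_sub_rev] at h4
    exact (norm_sub_le_norm_sub_add_norm_sub _ (g t) _).trans (by gcongr)
  rw [integral_add hfg (hexpint.const_mul _), integral_const_mul, hexpval] at hbound
  rw [dist_eq_norm, L1.norm_eq_integral_norm]
  linarith
end
end

section
/- Let α, β, γ, δ, a₀, d₀ be complex matrices of sizes p×p, p×q, q×p, q×q, p×p, q×q respectively, with a₀, d₀, α and δ invertible. Assume α*α − γ*γ = a₀, δ*δ − β*β = d₀ and α*β = γ*δ. Then the block matrix Q = [[α, β],[γ, δ]] of size (p+q)×(p+q) is invertible, and the following three identities hold: α a₀⁻¹ α* − β d₀⁻¹ β* = I_p, δ d₀⁻¹ δ* − γ a₀⁻¹ γ* = I_q, and α a₀⁻¹ γ* = β d₀⁻¹ δ*. -/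
/-!
With `J = diag(1, -1)` and `D = diag(a₀, -d₀)`, the three hypotheses are the blocks of
`Qᴴ * J * Q = D`, where `Q` is the block matrix. Hence `D⁻¹ * Qᴴ * J` is a left inverse of `Q`.
A left inverse of a square matrix is also a right inverse, and the blocks of
`Q * (D⁻¹ * Qᴴ * J) = 1` are the three identities of the conclusion.
-/

open Matrix

/-- Lemma 2.4: conditions (C1)–(C3) plus invertibility imply
invertibility of `Q` and conditions (C4)–(C6). -/
theorem stmt16 {p q : ℕ} (α : Matrix (Fin p) (Fin p) ℂ) (β : Matrix (Fin p) (Fin q) ℂ)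
    (γ : Matrix (Fin q) (Fin p) ℂ) (δ : Matrix (Fin q) (Fin q) ℂ)
    (a₀ : Matrix (Fin p) (Fin p) ℂ) (d₀ : Matrix (Fin q) (Fin q) ℂ)
    (ha₀ : IsUnit a₀) (hd₀ : IsUnit d₀) (hα : IsUnit α) (hδ : IsUnit δ)
    (h1 : αᴴ * α - γᴴ * γ = a₀) (h2 : δᴴ * δ - βᴴ * β = d₀) (h3 : αᴴ * β = γᴴ * δ) :
    IsUnit (Matrix.fromBlocks α β γ δ) ∧
    α * a₀⁻¹ * αᴴ - β * d₀⁻¹ * βᴴ = 1 ∧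
    δ * d₀⁻¹ * δᴴ - γ * a₀⁻¹ * γᴴ = 1 ∧
    α * a₀⁻¹ * γᴴ = β * d₀⁻¹ * δᴴ := by
  have ha : a₀⁻¹ * a₀ = 1 := nonsing_inv_mul _ ((isUnit_iff_isUnit_det _).mp ha₀)
  have hd : d₀⁻¹ * d₀ = 1 := nonsing_inv_mul _ ((isUnit_iff_isUnit_det _).mp hd₀)
  have h3' : βᴴ * α = δᴴ * γ := by
    simpa [conjTranspose_mul] using congrArg conjTranspose h3
  -- The left factor is `D⁻¹ * Qᴴ * J`, written out in blocks.
  have hL : fromBlocks (a₀⁻¹ * αᴴ) (-(a₀⁻¹ * γᴴ)) (-(d₀⁻¹ * βᴴ)) (d₀⁻¹ * δᴴ) *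
      fromBlocks α β γ δ = 1 := by
    rw [fromBlocks_multiply, ← fromBlocks_one]
    congr 1
    · rw [Matrix.neg_mul, Matrix.mul_assoc, Matrix.mul_assoc, ← sub_eq_add_neg,
        ← Matrix.mul_sub, h1, ha]
    · rw [Matrix.neg_mul, Matrix.mul_assoc, Matrix.mul_assoc, h3, add_neg_cancel]
    · rw [Matrix.neg_mul, Matrix.mul_assoc, Matrix.mul_assoc, h3', neg_add_cancel]
    · rw [Matrix.neg_mul, Matrix.mul_assoc, Matrix.mul_assoc, neg_add_eq_sub,
        ← Matrix.mul_sub, h2, hd]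
  have hR := mul_eq_one_comm.mp hL
  refine ⟨IsUnit.of_mul_eq_one _ hR, ?_⟩
  rw [fromBlocks_multiply, ← fromBlocks_one, fromBlocks_inj] at hR
  obtain ⟨e11, e12, -, e22⟩ := hR
  simp only [Matrix.mul_neg, ← Matrix.mul_assoc] at e11 e12 e22
  refine ⟨?_, ?_, ?_⟩
  · rw [sub_eq_add_neg, e11]
  · rw [← neg_add_eq_sub, e22]
  · exact (neg_add_eq_zero.mp e12)
end

section
/- Let α, β, γ, δ be p×p complex matrices with α and β upper triangular and γ and δ lower triangular, and suppose the diagonal parts diag(α) and diag(δ) are invertible and that α*α − γ*γ = diag(α), δ*δ − β*β = diag(δ) and α*β = γ*δ. Then g = −up((α*)⁻¹γ*) is the unique upper triangular p×p matrix satisfying all four conditions: α + gγ − I is strictly lower triangular, g*α + γ is strictly upper triangular, gδ + β is strictly lower triangular, and δ + g*β − I is strictly upper triangular. -/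
/-!
Write `X = (αᴴ)⁻¹ γᴴ` and split `X = up X + L` with `L` strictly lower triangular, so that
`g = L - X`. The hypotheses say exactly what happens to the four expressions when `g` is
replaced by `-X`: one gets `α - X γ = (αᴴ)⁻¹ diag α`, `γ - Xᴴ α = 0`, `β - X δ = 0` and
`δ - Xᴴ β = (δᴴ)⁻¹ diag δ`. The first is lower and the last upper triangular, and both have
unit diagonal because `diag α` and `diag δ` are Hermitian, being differences of Gram matrices
(`strictUpperTri_inv_mul_diagPart`, `strictUpperTri_diagPart_mul_inv`). The remaining terms
`L γ`, `Lᴴ α`, `L δ`, `Lᴴ β` are strictly triangular of the required kind.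

For uniqueness the condition on `gᴴ α + γ` alone suffices: it gives `g = (αᴴ)⁻¹ Sᴴ - X` with
`S` strictly upper triangular, and taking upper triangular parts removes the first term.
-/

open Matrix

noncomputable section

/-- The upper triangular part of a matrix. -/
def up {p : ℕ} (m : Matrix (Fin p) (Fin p) ℂ) : Matrix (Fin p) (Fin p) ℂ :=
  Matrix.of fun i j => if i ≤ j then m i j else 0

/-- The diagonal part of a matrix. -/
def diagPart {p : ℕ} (m : Matrix (Fin p) (Fin p) ℂ) : Matrix (Fin p) (Fin p) ℂ :=
  Matrix.diagonal fun i => m i i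

def UpperTri {p : ℕ} (m : Matrix (Fin p) (Fin p) ℂ) : Prop := ∀ i j, j < i → m i j = 0
def LowerTri {p : ℕ} (m : Matrix (Fin p) (Fin p) ℂ) : Prop := ∀ i j, i < j → m i j = 0
def StrictUpperTri {p : ℕ} (m : Matrix (Fin p) (Fin p) ℂ) : Prop := ∀ i j, j ≤ i → m i j = 0
def StrictLowerTri {p : ℕ} (m : Matrix (Fin p) (Fin p) ℂ) : Prop := ∀ i j, i ≤ j → m i j = 0

section Triangular

variable {p : ℕ} {A B : Matrix (Fin p) (Fin p) ℂ}

lemma UpperTri.blockTriangular (hA : UpperTri A) : A.BlockTriangular id := fun i j h => hA i j h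

lemma LowerTri.conjTranspose (hA : LowerTri A) : UpperTri Aᴴ := fun i j h => by
  simp [Matrix.conjTranspose_apply, hA j i h]

lemma StrictLowerTri.conjTranspose (hA : StrictLowerTri A) : StrictUpperTri Aᴴ := fun i j h => by
  simp [Matrix.conjTranspose_apply, hA j i h]

lemma StrictUpperTri.conjTranspose (hA : StrictUpperTri A) : StrictLowerTri Aᴴ := fun i j h => by
  simp [Matrix.conjTranspose_apply, hA j i h]

lemma StrictUpperTri.add (hA : StrictUpperTri A) (hB : StrictUpperTri B) :
    StrictUpperTri (A + B) := fun i j h => by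
  simp [hA i j h, hB i j h]

lemma StrictUpperTri.mul_upperTri (hA : StrictUpperTri A) (hB : UpperTri B) :
    StrictUpperTri (A * B) := fun i j h => by
  rw [Matrix.mul_apply]
  refine Finset.sum_eq_zero fun k _ => ?_
  rcases le_or_gt k i with hk | hk
  · rw [hA i k hk, zero_mul]
  · rw [hB k j (h.trans_lt hk), mul_zero]

lemma StrictLowerTri.mul_lowerTri (hA : StrictLowerTri A) (hB : LowerTri B) :
    StrictLowerTri (A * B) := fun i j h => by
  rw [Matrix.mul_apply]
  refine Finset.sum_eq_zero fun k _ => ?_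
  rcases le_or_gt i k with hk | hk
  · rw [hA i k hk, zero_mul]
  · rw [hB k j (hk.trans_le h), mul_zero]

lemma UpperTri.mul_apply_self (hA : UpperTri A) (hB : UpperTri B) (i : Fin p) :
    (A * B) i i = A i i * B i i := by
  rw [Matrix.mul_apply]
  refine Finset.sum_eq_single i (fun k _ hk => ?_) (by simp)
  rcases lt_or_gt_of_ne hk with h | h
  · rw [hA i k h, zero_mul]
  · rw [hB k i h, mul_zero]

lemma UpperTri.isUnit_det (hA : UpperTri A) (hd : IsUnit (diagPart A)) : IsUnit A.det := by
  rw [Matrix.isUnit_iff_isUnit_det, diagPart, Matrix.det_diagonal] at hd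
  rwa [Matrix.det_of_upperTriangular hA.blockTriangular]

lemma UpperTri.inv (hA : UpperTri A) (h : IsUnit A.det) : UpperTri A⁻¹ := by
  haveI := Matrix.invertibleOfIsUnitDet A h
  exact fun i j hij => Matrix.blockTriangular_inv_of_blockTriangular hA.blockTriangular hij

lemma UpperTri.inv_apply_self_mul (hA : UpperTri A) (h : IsUnit A.det) (i : Fin p) :
    A⁻¹ i i * A i i = 1 := by
  rw [← (hA.inv h).mul_apply_self hA, Matrix.nonsing_inv_mul A h, Matrix.one_apply_eq]

lemma strictUpperTri_inv_mul_diagPart (hA : UpperTri A) (h : IsUnit A.det) :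
    StrictUpperTri (A⁻¹ * diagPart A - 1) := fun i j hij => by
  rw [Matrix.sub_apply, diagPart, Matrix.mul_diagonal]
  rcases hij.lt_or_eq with hlt | rfl
  · rw [hA.inv h i j hlt, Matrix.one_apply_ne hlt.ne', zero_mul, sub_zero]
  · rw [hA.inv_apply_self_mul h, Matrix.one_apply_eq, sub_self]

lemma strictUpperTri_diagPart_mul_inv (hA : UpperTri A) (h : IsUnit A.det) :
    StrictUpperTri (diagPart A * A⁻¹ - 1) := fun i j hij => by
  rw [Matrix.sub_apply, diagPart, Matrix.diagonal_mul]
  rcases hij.lt_or_eq with hlt | rfl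
  · rw [hA.inv h i j hlt, Matrix.one_apply_ne hlt.ne', mul_zero, sub_zero]
  · rw [mul_comm, hA.inv_apply_self_mul h, Matrix.one_apply_eq, sub_self]

lemma diagPart_conjTranspose (A : Matrix (Fin p) (Fin p) ℂ) :
    diagPart Aᴴ = (diagPart A)ᴴ := by
  rw [diagPart, diagPart, Matrix.diagonal_conjTranspose]
  rfl

lemma strictLowerTri_sub_up (A : Matrix (Fin p) (Fin p) ℂ) : StrictLowerTri (A - up A) :=
  fun i j h => by simp [up, h]

end Triangular

/-- finite dimensional twofold EG inverse problem, Section 3.2. -/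
theorem stmt17 {p : ℕ} (α β γ δ : Matrix (Fin p) (Fin p) ℂ)
    (hα : UpperTri α) (hβ : UpperTri β) (hγ : LowerTri γ) (hδ : LowerTri δ)
    (hαd : IsUnit (diagPart α)) (hδd : IsUnit (diagPart δ))
    (h1 : αᴴ * α - γᴴ * γ = diagPart α) (h2 : δᴴ * δ - βᴴ * β = diagPart δ)
    (h3 : αᴴ * β = γᴴ * δ) :
    (UpperTri (-up ((αᴴ)⁻¹ * γᴴ)) ∧
      StrictLowerTri (α + (-up ((αᴴ)⁻¹ * γᴴ)) * γ - 1) ∧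
      StrictUpperTri ((-up ((αᴴ)⁻¹ * γᴴ))ᴴ * α + γ) ∧
      StrictLowerTri ((-up ((αᴴ)⁻¹ * γᴴ)) * δ + β) ∧
      StrictUpperTri (δ + (-up ((αᴴ)⁻¹ * γᴴ))ᴴ * β - 1)) ∧
    ∀ g : Matrix (Fin p) (Fin p) ℂ, UpperTri g →
      StrictLowerTri (α + g * γ - 1) → StrictUpperTri (gᴴ * α + γ) →
      StrictLowerTri (g * δ + β) → StrictUpperTri (δ + gᴴ * β - 1) →
      g = -up ((αᴴ)⁻¹ * γᴴ) := by
  -- The diagonal parts are Hermitian, as differences of Gram matrices.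
  have ha : (diagPart α)ᴴ = diagPart α := by
    rw [← h1]; simp [Matrix.conjTranspose_sub, Matrix.conjTranspose_mul]
  have hd : diagPart δᴴ = diagPart δ := by
    rw [diagPart_conjTranspose, ← h2]
    simp [Matrix.conjTranspose_sub, Matrix.conjTranspose_mul]
  have uα : IsUnit α.det := hα.isUnit_det hαd
  have uαs : IsUnit αᴴ.det := by rw [Matrix.det_conjTranspose]; exact uα.star
  have uδs : IsUnit δᴴ.det := hδ.conjTranspose.isUnit_det (by rwa [hd])
  have h3' : δᴴ * γ = βᴴ * α := by
    have := congrArg Matrix.conjTranspose h3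
    simpa [Matrix.conjTranspose_mul] using this.symm
  obtain ⟨X, hX⟩ : ∃ X, X = (αᴴ)⁻¹ * γᴴ := ⟨_, rfl⟩
  rw [← hX]
  have hXs : Xᴴ = γ * α⁻¹ := by
    rw [hX, Matrix.conjTranspose_mul, Matrix.conjTranspose_nonsing_inv]
    simp
  obtain ⟨L, hL⟩ : ∃ L, L = X - up X := ⟨_, rfl⟩
  have sL : StrictLowerTri L := hL ▸ strictLowerTri_sub_up X
  have hg : -up X = L - X := by rw [hL]; abel
  -- The values of the four expressions at `-X` in place of `g`.
  have e1 : α - X * γ = (αᴴ)⁻¹ * diagPart α := by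
    rw [← h1, Matrix.mul_sub, Matrix.nonsing_inv_mul_cancel_left _ _ uαs, hX, Matrix.mul_assoc]
  have e2 : Xᴴ * α = γ := by
    rw [hXs, Matrix.nonsing_inv_mul_cancel_right _ _ uα]
  have e3 : X * δ = β := by
    rw [hX, Matrix.mul_assoc, ← h3, Matrix.nonsing_inv_mul_cancel_left _ _ uαs]
  have e4 : δ - Xᴴ * β = (δᴴ)⁻¹ * diagPart δ := by
    have : δᴴ * (δ - Xᴴ * β) = diagPart δ := by
      rw [← h2, Matrix.mul_sub, hXs, ← Matrix.mul_assoc, ← Matrix.mul_assoc, h3',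
        Matrix.mul_nonsing_inv_cancel_right _ _ uα]
    rw [← this, Matrix.nonsing_inv_mul_cancel_left _ _ uδs]
  refine ⟨⟨?_, ?_, ?_, ?_, ?_⟩, ?_⟩
  · intro i j h
    simp [up, not_le.mpr h]
  · have s1 : StrictLowerTri ((αᴴ)⁻¹ * diagPart α - 1) := by
      have := (strictUpperTri_diagPart_mul_inv hα uα).conjTranspose
      rwa [Matrix.conjTranspose_sub, Matrix.conjTranspose_mul, ha,
        Matrix.conjTranspose_nonsing_inv, Matrix.conjTranspose_one] at this
    have : α + (-up X) * γ - 1 = ((αᴴ)⁻¹ * diagPart α - 1) + L * γ := by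
      rw [hg, ← e1, Matrix.sub_mul]; abel
    rw [this]
    intro i j h
    rw [Matrix.add_apply, s1 i j h, sL.mul_lowerTri hγ i j h, add_zero]
  · have : (-up X)ᴴ * α + γ = Lᴴ * α := by
      rw [hg, Matrix.conjTranspose_sub, Matrix.sub_mul, e2]; abel
    rw [this]
    exact sL.conjTranspose.mul_upperTri hα
  · have : (-up X) * δ + β = L * δ := by
      rw [hg, Matrix.sub_mul, e3]; abel
    rw [this]
    exact sL.mul_lowerTri hδ
  · have s4 := strictUpperTri_inv_mul_diagPart hδ.conjTranspose uδs
    rw [hd, ← e4] at s4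
    have : δ + (-up X)ᴴ * β - 1 = (δ - Xᴴ * β - 1) + Lᴴ * β := by
      rw [hg, Matrix.conjTranspose_sub, Matrix.sub_mul]; abel
    rw [this]
    exact s4.add (sL.conjTranspose.mul_upperTri hβ)
  · intro g hgU _ hS _ _
    have hadj : gᴴ + Xᴴ = (gᴴ * α + γ) * α⁻¹ := by
      rw [Matrix.add_mul, Matrix.mul_nonsing_inv_cancel_right _ _ uα, hXs]
    have sgX := hS.mul_upperTri (hα.inv uα)
    rw [← hadj, ← Matrix.conjTranspose_add] at sgX
    have sgX' := sgX.conjTranspose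
    rw [Matrix.conjTranspose_conjTranspose] at sgX'
    ext i j
    rcases le_or_gt i j with h | h
    · have := sgX' i j h
      rw [Matrix.add_apply] at this
      simpa [up, h] using eq_neg_of_add_eq_zero_left this
    · simp [up, not_le.mpr h, hgU i j h]
end
end
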